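/- On a 2×2 setting and general d: if τ ∈ P_k(T; 𝕂) (antisymmetric-matrix-valued polynomial on a d-simplex T) satisfies (τ, q)_T = 0 for all q ∈ P_{k-2}(T; 𝕂) and τn = 0 on every face of T, then τ = 0. -/

import Mathlib

open Matrix MvPolynomial MeasureTheory

namespace AntisymAux

/-- A polynomial vanishing on a set with nonempty interior is zero. -/
lemma poly_zero {d : ℕ} {S : Set (Fin d → ℝ)} (hS : (interior S).Nonempty)
    (f : MvPolynomial (Fin d) ℝ) (hf : ∀ x ∈ interior S, eval x f = 0) : f = 0 := by
  obtain ⟨x, hx⟩ := hS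
  obtain ⟨r, hr, hb⟩ := Metric.isOpen_iff.1 isOpen_interior x hx
  refine funext_set (fun i => Metric.ball (x i) r) ?_ ?_
  · intro i
    rw [Real.ball_eq_Ioo]
    exact Set.Ioo_infinite (by linarith)
  · intro y hy
    rw [map_zero]
    apply hf y (hb _)
    rw [ball_pi x hr]
    exact hy

/-- The linear polynomial `c⁻¹ (x - p)·m`. -/
noncomputable def lin {d : ℕ} (p m : Fin d → ℝ) : MvPolynomial (Fin d) ℝ :=
  C (((p ⬝ᵥ m) : ℝ)) * C (-1) + ∑ a, C (m a) * X a

lemma eval_lin {d : ℕ} (p m x : Fin d → ℝ) : eval x (lin p m) = (x - p) ⬝ᵥ m := by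
  simp only [lin, map_add, map_mul, eval_C, map_sum, eval_X, sub_dotProduct]
  simp only [dotProduct, mul_comm]
  ring

/-- substitution `x ↦ x - l(x) w`. -/
noncomputable def prj {d : ℕ} (l : MvPolynomial (Fin d) ℝ) (w : Fin d → ℝ) :
    MvPolynomial (Fin d) ℝ →ₐ[ℝ] MvPolynomial (Fin d) ℝ :=
  aeval (fun a => X a - l * C (w a))

lemma eval_prj {d : ℕ} (l f : MvPolynomial (Fin d) ℝ) (w x : Fin d → ℝ) :
    eval x (prj l w f) = eval (x - eval x l • w) f := by
  have : ((aeval x).comp (prj l w) : MvPolynomial (Fin d) ℝ →ₐ[ℝ] ℝ)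
      = aeval (x - eval x l • w) := by
    apply algHom_ext
    intro a
    simp [prj, aeval_eq_eval]
  have h2 := DFunLike.congr_fun this f
  simpa [aeval_eq_eval] using h2

lemma dvd_sub_prj {d : ℕ} (l f : MvPolynomial (Fin d) ℝ) (w : Fin d → ℝ) :
    l ∣ f - prj l w f := by
  rw [← Ideal.mem_span_singleton, ← Ideal.Quotient.mk_eq_mk_iff_sub_mem]
  have : ((Ideal.Quotient.mkₐ ℝ (Ideal.span {l})).comp (prj l w))
      = Ideal.Quotient.mkₐ ℝ (Ideal.span {l}) := by
    apply algHom_ext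
    intro a
    have : Ideal.Quotient.mk (Ideal.span {l}) l = 0 :=
      Ideal.Quotient.eq_zero_iff_mem.2 (Ideal.mem_span_singleton_self l)
    simp [prj, this]
  exact (DFunLike.congr_fun this f).symm

lemma linear_facts {d : ℕ} (v : Fin (d + 1) → Fin d → ℝ) (hv : AffineIndependent ℝ v)
    (m : Fin d → Fin d → ℝ) (hm : ∀ i, m i ≠ 0)
    (hort : ∀ i j, i ≠ j → (v j.succ - v 0) ⬝ᵥ m i = 0) :
    (∀ i, (v i.succ - v 0) ⬝ᵥ m i ≠ 0) ∧ IsUnit (Matrix.of m) := by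
  have hli : LinearIndependent ℝ (Matrix.of (fun j : Fin d => v j.succ - v 0)).row := by
    have h := (affineIndependent_iff_linearIndependent_vsub ℝ v 0).1 hv
    exact h.comp (fun j : Fin d => (⟨j.succ, Fin.succ_ne_zero j⟩ : {x : Fin (d+1) // x ≠ 0}))
      (fun a b hab => by simpa using hab)
  have hA := Matrix.linearIndependent_rows_iff_isUnit.1 hli
  set A := Matrix.of (fun j : Fin d => v j.succ - v 0) with hAdef
  have hc : ∀ i, (v i.succ - v 0) ⬝ᵥ m i ≠ 0 := by
    intro i h0
    apply hm i
    have h1 : A *ᵥ m i = 0 := by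
      funext j
      by_cases hij : i = j
      · subst hij; exact h0
      · exact hort i j hij
    exact Matrix.mulVec_injective_of_isUnit hA (by simpa using h1)
  refine ⟨hc, ?_⟩
  have hAM : A * (Matrix.of m)ᵀ = Matrix.diagonal (fun i => (v i.succ - v 0) ⬝ᵥ m i) := by
    ext j i
    by_cases hij : i = j
    · subst hij; simp [Matrix.mul_apply, hAdef, dotProduct]
    · rw [Matrix.diagonal_apply_ne _ (Ne.symm hij)]
      exact hort i j hij
  rw [Matrix.isUnit_iff_isUnit_det, isUnit_iff_ne_zero]
  intro h0
  have := congrArg Matrix.det hAM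
  rw [Matrix.det_mul, Matrix.det_transpose, h0, mul_zero, Matrix.det_diagonal] at this
  exact Finset.prod_ne_zero_iff.2 (fun i _ => hc i) this.symm

end AntisymAux

/-- If an antisymmetric-matrix-valued polynomial
`τ ∈ P_k(T; 𝕂)` on a `d`-simplex `T` satisfies `(τ, q)_T = 0` (L² Frobenius
pairing) for all antisymmetric-matrix-valued `q ∈ P_{k-2}(T; 𝕂)`, and
`τ n = 0` on every face of `T` (with `n` the normal to that face), then
`τ = 0`. -/
theorem antisym_poly_vanish_of_orth_and_boundary (d k : ℕ) (hd : 1 ≤ d)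
    (v : Fin (d + 1) → Fin d → ℝ) (hv : AffineIndependent ℝ v)
    (T : Set (Fin d → ℝ)) (hT : T = convexHull ℝ (Set.range v))
    (n : Fin (d + 1) → Fin d → ℝ) (hn : ∀ i, n i ≠ 0)
    (hnormal : ∀ i, ∀ x ∈ convexHull ℝ (v '' ({i}ᶜ : Set (Fin (d + 1)))),
      ∀ y ∈ convexHull ℝ (v '' ({i}ᶜ : Set (Fin (d + 1)))), (x - y) ⬝ᵥ n i = 0)
    (τ : Matrix (Fin d) (Fin d) (MvPolynomial (Fin d) ℝ))
    (hτdeg : ∀ a b, (τ a b).totalDegree ≤ k)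
    (hτskw : ∀ a b, τ b a = - τ a b)
    (hface : ∀ i, ∀ x ∈ convexHull ℝ (v '' ({i}ᶜ : Set (Fin (d + 1)))),
      ∀ a, ∑ b, eval x (τ a b) * n i b = 0)
    (horth : ∀ p : Matrix (Fin d) (Fin d) (MvPolynomial (Fin d) ℝ),
      (∀ a b, (p a b).totalDegree ≤ k - 2) → (∀ a b, p b a = - p a b) →
      ∫ x in T, ∑ a, ∑ b, eval x (τ a b) * eval x (p a b) = 0) :
    τ = 0 := by
  classical
  set m : Fin d → Fin d → ℝ := fun i => n i.succ with hmdef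
  have hmem : ∀ (i j : Fin (d+1)), j ≠ i →
      v j ∈ convexHull ℝ (v '' ({i}ᶜ : Set (Fin (d + 1)))) := fun i j hij =>
    subset_convexHull ℝ _ ⟨j, hij, rfl⟩
  have hort : ∀ i j : Fin d, i ≠ j → (v j.succ - v 0) ⬝ᵥ m i = 0 := fun i j hij =>
    hnormal i.succ _ (hmem _ _ (by simpa using hij.symm)) _
      (hmem _ _ (Fin.succ_ne_zero i).symm)
  obtain ⟨hc, hM⟩ := AntisymAux.linear_facts v hv m (fun i => hn _) hort
  set c : Fin d → ℝ := fun i => (v i.succ - v 0) ⬝ᵥ m i with hcdef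
  set w : Fin d → Fin d → ℝ := fun i => v i.succ - v 0 with hwdef
  set L : Fin d → MvPolynomial (Fin d) ℝ := fun i => C (c i)⁻¹ * AntisymAux.lin (v 0) (m i) with hL
  have hLe : ∀ i x, eval x (L i) = (c i)⁻¹ * ((x - v 0) ⬝ᵥ m i) := by
    intro i x; simp only [hL, map_mul, eval_C, AntisymAux.eval_lin]
  have hL0 : ∀ i, eval (v 0) (L i) = 0 := by intro i; simp [hLe]
  have hL1 : ∀ i, eval (v i.succ) (L i) = 1 := by
    intro i; rw [hLe]; exact inv_mul_cancel₀ (hc i)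
  have hLij : ∀ i j, i ≠ j → eval (v j.succ) (L i) = 0 := by
    intro i j hij; rw [hLe, hort i j hij, mul_zero]
  have hLaff : ∀ i x y (a b : ℝ), a + b = 1 →
      eval (a • x + b • y) (L i) = a * eval x (L i) + b * eval y (L i) := by
    intro i x y a b hab
    simp only [hLe, sub_dotProduct, add_dotProduct, smul_dotProduct, smul_eq_mul]
    have : a = 1 - b := by linarith
    subst this; ring
  have hLne : ∀ i, L i ≠ 0 := by
    intro i h; have := hL1 i; rw [h] at this; simp at this
  have hLdeg : ∀ i, 1 ≤ (L i).totalDegree := by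
    intro i
    by_contra h
    have h0 : (L i).totalDegree = 0 := by omega
    rw [totalDegree_eq_zero_iff_eq_C] at h0
    have h1 := hL1 i
    have h2 := hL0 i
    rw [h0, eval_C] at h1 h2
    rw [h1] at h2
    exact one_ne_zero h2
  -- geometry of `T`
  have hTint : (interior T).Nonempty := by
    rw [hT, interior_convexHull_nonempty_iff_affineSpan_eq_top,
      hv.affineSpan_eq_top_iff_card_eq_finrank_add_one]
    simp
  have hTcpt : IsCompact T := by
    rw [hT]; exact (Set.finite_range v).isCompact_convexHull ℝ
  have hLpos : ∀ i, ∀ x ∈ T, 0 ≤ eval x (L i) := by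
    intro i x hx
    rw [hT] at hx
    refine convexHull_min (t := {x | 0 ≤ eval x (L i)}) ?_ ?_ hx
    · rintro _ ⟨j, rfl⟩
      refine Fin.cases ?_ (fun j => ?_) j
      · exact (hL0 i).ge
      · by_cases hij : i = j
        · subst hij; simp [hL1]
        · exact (hLij i j hij).ge
    · intro x hx y hy a b ha hb hab
      simp only [Set.mem_ofPred_eq] at *
      rw [hLaff _ _ _ _ _ hab]
      positivity
  have hproj : ∀ i, ∀ x ∈ T, x - eval x (L i) • w i ∈
      convexHull ℝ (v '' ({i.succ}ᶜ : Set (Fin (d + 1)))) := by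
    intro i x hx
    rw [hT] at hx
    refine convexHull_min (t := {x | x - eval x (L i) • w i ∈
      convexHull ℝ (v '' ({i.succ}ᶜ : Set (Fin (d + 1))))}) ?_ ?_ hx
    · rintro _ ⟨j, rfl⟩
      refine Fin.cases ?_ (fun j => ?_) j
      · simp only [Set.mem_ofPred_eq, hL0, zero_smul, sub_zero]
        exact hmem _ _ (Fin.succ_ne_zero i).symm
      · by_cases hij : i = j
        · subst hij
          simp only [Set.mem_ofPred_eq, hL1, one_smul, hwdef, sub_sub_cancel]
          exact hmem _ _ (Fin.succ_ne_zero i).symm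
        · simp only [Set.mem_ofPred_eq, hLij i j hij, zero_smul, sub_zero]
          exact hmem _ _ (by simpa using Ne.symm hij)
    · intro x hx y hy a b ha hb hab
      simp only [Set.mem_ofPred_eq] at *
      rw [hLaff _ _ _ _ _ hab]
      have := convex_convexHull ℝ (v '' ({i.succ}ᶜ : Set (Fin (d + 1)))) hx hy ha hb hab
      convert this using 1
      module
  -- vanishing on a face
  have hvan : ∀ i (f : MvPolynomial (Fin d) ℝ),
      (∀ x ∈ convexHull ℝ (v '' ({i.succ}ᶜ : Set (Fin (d + 1)))), eval x f = 0) →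
      AntisymAux.prj (L i) (w i) f = 0 := by
    intro i f hf
    apply AntisymAux.poly_zero hTint
    intro x hx
    rw [AntisymAux.eval_prj]
    exact hf _ (hproj i x (interior_subset hx))
  have hdvd : ∀ i (f : MvPolynomial (Fin d) ℝ), AntisymAux.prj (L i) (w i) f = 0 → L i ∣ f := by
    intro i f hf
    have := AntisymAux.dvd_sub_prj (L i) f (w i)
    rwa [hf, sub_zero] at this
  have hprjL : ∀ i j, i ≠ j → AntisymAux.prj (L j) (w j) (L i) = L i := by
    intro i j hij
    apply MvPolynomial.funext
    intro x
    have h1 : w j ⬝ᵥ m i = 0 := hort i j hij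
    rw [AntisymAux.eval_prj, hLe i, hLe i x, sub_right_comm, sub_dotProduct _ (_ • w j),
      smul_dotProduct, h1, smul_zero, sub_zero]
  -- the scalar components
  set F : Fin d → Fin d → MvPolynomial (Fin d) ℝ :=
    fun i j => ∑ a, ∑ b, C (m i a) * τ a b * C (m j b) with hF
  have hFskw : ∀ i j, F j i = - F i j := by
    intro i j
    simp only [hF]
    rw [Finset.sum_comm, ← Finset.sum_neg_distrib]
    refine Finset.sum_congr rfl fun a _ => ?_
    rw [← Finset.sum_neg_distrib]
    refine Finset.sum_congr rfl fun b _ => ?_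
    rw [hτskw a b]; ring
  have hFface : ∀ i j, ∀ x ∈ convexHull ℝ (v '' ({j.succ}ᶜ : Set (Fin (d + 1)))),
      eval x (F i j) = 0 := by
    intro i j x hx
    simp only [hF, map_sum, map_mul, eval_C]
    refine Finset.sum_eq_zero fun a _ => ?_
    have := hface j.succ x hx a
    calc ∑ b, m i a * eval x (τ a b) * m j b
        = m i a * ∑ b, eval x (τ a b) * n j.succ b := by
          rw [Finset.mul_sum]
          exact Finset.sum_congr rfl fun b _ => by rw [mul_assoc]
      _ = 0 := by rw [this, mul_zero]
  have hFdeg : ∀ i j, (F i j).totalDegree ≤ k := by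
    intro i j
    refine totalDegree_finsetSum_le fun a _ => totalDegree_finsetSum_le fun b _ => ?_
    refine (totalDegree_mul _ _).trans ?_
    rw [totalDegree_C, add_zero]
    refine (totalDegree_mul _ _).trans ?_
    rw [totalDegree_C, zero_add]
    exact hτdeg a b
  have hex : ∀ i j, ∃ q, F i j = L i * L j * q := by
    intro i j
    by_cases hij : i = j
    · subst hij
      refine ⟨0, ?_⟩
      rw [mul_zero]
      exact self_eq_neg.1 (hFskw i i)
    · have h1 : AntisymAux.prj (L j) (w j) (F i j) = 0 := hvan j _ (hFface i j)
      have h2 : L i ∣ F i j := by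
        apply hdvd; apply hvan
        intro x hx
        rw [hFskw j i, map_neg, hFface j i x hx, neg_zero]
      obtain ⟨g, hg⟩ := h2
      rw [hg, map_mul, hprjL i j hij] at h1
      obtain ⟨q, hq⟩ := hdvd j g ((mul_eq_zero.1 h1).resolve_left (hLne i))
      exact ⟨q, by rw [hg, hq]; ring⟩
  choose q hq using hex
  have hqskw : ∀ i j, q j i = - q i j := by
    intro i j
    have h := hFskw i j
    rw [hq, hq] at h
    apply mul_left_cancel₀ (mul_ne_zero (hLne j) (hLne i))
    rw [h]; ring
  have hqdeg : ∀ i j, (q i j).totalDegree ≤ k - 2 := by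
    intro i j
    by_cases h0 : q i j = 0
    · simp [h0]
    · have h := hFdeg i j
      rw [hq, totalDegree_mul_of_isDomain (mul_ne_zero (hLne i) (hLne j)) h0,
        totalDegree_mul_of_isDomain (hLne i) (hLne j)] at h
      have := hLdeg i
      have := hLdeg j
      omega
  have horth' := horth (Matrix.of fun a b => ∑ i, ∑ j, C (m i a) * q i j * C (m j b))
    (by
      intro a b
      rw [Matrix.of_apply]
      refine totalDegree_finsetSum_le fun i _ => totalDegree_finsetSum_le fun j _ => ?_
      refine (totalDegree_mul _ _).trans ?_
      rw [totalDegree_C, add_zero]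
      refine (totalDegree_mul _ _).trans ?_
      rw [totalDegree_C, zero_add]
      exact hqdeg i j)
    (by
      intro a b
      simp only [Matrix.of_apply]
      rw [Finset.sum_comm, ← Finset.sum_neg_distrib]
      refine Finset.sum_congr rfl fun i _ => ?_
      rw [← Finset.sum_neg_distrib]
      refine Finset.sum_congr rfl fun j _ => ?_
      rw [hqskw i j]; ring)
  have hint : ∀ x, ∑ a, ∑ b, eval x (τ a b) *
      eval x ((Matrix.of fun a b => ∑ i, ∑ j, C (m i a) * q i j * C (m j b)) a b)
      = ∑ i, ∑ j, eval x (L i) * eval x (L j) * (eval x (q i j))^2 := by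
    intro x
    have h1 : ∀ i j, eval x (L i) * eval x (L j) * (eval x (q i j))^2
        = ∑ a, ∑ b, eval x (τ a b) * (m i a * eval x (q i j) * m j b) := by
      intro i j
      have h := congrArg (eval x) (hq i j)
      simp only [hF, map_sum, map_mul, eval_C] at h
      rw [pow_two, ← mul_assoc, ← h, Finset.sum_mul]
      refine Finset.sum_congr rfl fun a _ => ?_
      rw [Finset.sum_mul]
      refine Finset.sum_congr rfl fun b _ => ?_
      ring
    simp only [h1, Matrix.of_apply, map_sum, map_mul, eval_C, Finset.mul_sum]
    -- reorder the sums
    have e1 : ∀ (G : Fin d → Fin d → Fin d → Fin d → ℝ),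
        ∑ a, ∑ b, ∑ i, ∑ j, G a b i j = ∑ i, ∑ j, ∑ a, ∑ b, G a b i j := by
      intro G
      have e2 : ∀ a, ∑ b, ∑ i, ∑ j, G a b i j = ∑ i, ∑ j, ∑ b, G a b i j := by
        intro a
        rw [Finset.sum_comm]
        exact Finset.sum_congr rfl fun i _ => Finset.sum_comm
      simp only [e2]
      rw [Finset.sum_comm]
      exact Finset.sum_congr rfl fun i _ => Finset.sum_comm
    exact e1 _
  simp only [hint] at horth'
  have hcont : Continuous fun x : Fin d → ℝ =>
      ∑ i, ∑ j, eval x (L i) * eval x (L j) * (eval x (q i j))^2 := by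
    have := fun p : MvPolynomial (Fin d) ℝ => p.continuous_eval
    fun_prop
  have hnn : ∀ i j, ∀ x ∈ T, 0 ≤ eval x (L i) * eval x (L j) * (eval x (q i j))^2 :=
    fun i j x hx => mul_nonneg (mul_nonneg (hLpos i x hx) (hLpos j x hx)) (sq_nonneg _)
  have hae := (setIntegral_eq_zero_iff_of_nonneg_ae
    (ae_restrict_of_forall_mem hTcpt.measurableSet
      (fun x hx => Finset.sum_nonneg fun i _ => Finset.sum_nonneg fun j _ => hnn i j x hx))
    (hcont.continuousOn.integrableOn_compact hTcpt)).1 horth'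
  have hzero := Measure.eqOn_open_of_ae_eq
    (ae_restrict_of_ae_restrict_of_subset (interior_subset (s := T)) hae) isOpen_interior
    hcont.continuousOn continuousOn_const
  have hq0 : ∀ i j, q i j = 0 := by
    intro i j
    have : L i * L j * (q i j)^2 = 0 := by
      apply AntisymAux.poly_zero hTint
      intro x hx
      have hxT := interior_subset hx
      have h := hzero hx
      simp only [Pi.zero_apply] at h
      have h1 := (Finset.sum_eq_zero_iff_of_nonneg
        (fun i _ => Finset.sum_nonneg fun j _ => hnn i j x hxT)).1 h i (Finset.mem_univ _)
      have h2 := (Finset.sum_eq_zero_iff_of_nonneg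
        (fun j _ => hnn i j x hxT)).1 h1 j (Finset.mem_univ _)
      simpa using h2
    exact pow_eq_zero_iff two_ne_zero |>.1
      ((mul_eq_zero.1 this).resolve_left (mul_ne_zero (hLne i) (hLne j)))
  have hmat : (Matrix.of m).map C * τ * ((Matrix.of m).map C)ᵀ = 0 := by
    ext1 i j
    have h := hq i j
    rw [hq0, mul_zero] at h
    simp only [hF] at h
    rw [Finset.sum_comm] at h
    rw [Matrix.zero_apply, ← h]
    simp only [Matrix.mul_apply, Matrix.transpose_apply, Matrix.map_apply, Matrix.of_apply,
      Finset.sum_mul]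
  have hU : IsUnit ((Matrix.of m).map (C : ℝ →+* MvPolynomial (Fin d) ℝ)) :=
    hM.map (C : ℝ →+* MvPolynomial (Fin d) ℝ).mapMatrix
  have hU' : IsUnit ((Matrix.of m).map (C : ℝ →+* MvPolynomial (Fin d) ℝ))ᵀ :=
    (Matrix.isUnit_transpose _).2 hU
  have h3 := hU'.mul_left_eq_zero.1 hmat
  exact hU.mul_right_eq_zero.1 h3
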